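/- For every d ≥ 1, there do not exist five pairwise distinct finite sets Σ₁, ..., Σ₅, each of cardinality d+1, such that for all 1 ≤ i < j ≤ 5 one has |Σᵢ ∩ Σⱼ| = d if and only if {i,j} ∈ {{1,2},{1,3},{1,5},{2,3},{2,4},{3,4},{4,5}}. In other words, the graph G₁ with vertex set {1,...,5} and edge set {12, 13, 15, 23, 24, 34, 45} is not the dual graph of any pure simplicial complex of any dimension. -/

import Mathlib

/-!
Write `A, B, C, D, E` for the five facets, so that `ABC` and `BCD` are triangles, `A` and `D` are
not adjacent, and `E` is adjacent to `A` and `D` only. A `(d+1)`-set adjacent to both `B` and `C`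
either contains the `d`-set `B ∩ C` or is contained in the `(d+2)`-set `B ∪ C`
(`inter_subset_or_subset_union`). If `A` and `D` were of the same kind, they would be adjacent.
So, up to the symmetry `A ↔ D`, we have `B ∩ C ⊆ A` and `D ⊆ B ∪ C`. Then `E` meets `B ∩ C` in at
least `|E ∩ A| - 1 = d - 1` points and `B ∪ C` in at least `|E ∩ D| = d` points, whence
`|E ∩ B| + |E ∩ C| ≥ 2d - 1`; so `E` is adjacent to `B` or to `C`
(`lt_card_inter_add_card_inter`), a contradiction.
-/

theorem card_inter_le_of_ne {α : Type*} [DecidableEq α] {d : ℕ} {X Y : Finset α}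
    (hX : X.card = d + 1) (hY : Y.card = d + 1) (hne : X ≠ Y) : (X ∩ Y).card ≤ d := by
  by_contra! h
  have h1 : X ∩ Y = X := Finset.eq_of_subset_of_card_le Finset.inter_subset_left (by omega)
  have h2 : X ∩ Y = Y := Finset.eq_of_subset_of_card_le Finset.inter_subset_right (by omega)
  exact hne (h1.symm.trans h2)

/-- The two types of triangles in the dual graph: three pairwise adjacent facets share a common
`d`-set or lie in a common `(d+2)`-set. -/
theorem inter_subset_or_subset_union {α : Type*} [DecidableEq α] {d : ℕ} {X B C : Finset α}
    (hX : X.card = d + 1) (hBC : (B ∩ C).card = d) (hXB : (X ∩ B).card = d)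
    (hXC : (X ∩ C).card = d) : B ∩ C ⊆ X ∨ X ⊆ B ∪ C := by
  by_contra! ⟨h1, h2⟩
  obtain ⟨p, hpX, hp⟩ := Finset.not_subset.1 h2
  rw [Finset.mem_union, not_or] at hp
  have he : (X.erase p).card = d := by rw [Finset.card_erase_of_mem hpX]; omega
  -- A point `p` of `X` outside `B ∪ C` forces `X ∩ B` and `X ∩ C` to be all of `X \ {p}`.
  have hB : X ∩ B = X.erase p :=
    Finset.eq_of_subset_of_card_le (by grind) (by omega)
  have hC : X ∩ C = X.erase p :=
    Finset.eq_of_subset_of_card_le (by grind) (by omega)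
  have hR : X.erase p = B ∩ C :=
    Finset.eq_of_subset_of_card_le (by grind) (by omega)
  exact h1 (hR ▸ Finset.erase_subset p X)

/-- When `A` contains `B ∩ C` and `D` is contained in `B ∪ C`, a common neighbour `E` of `A` and
`D` is too close to `B` and `C` to be adjacent to neither of them. -/
theorem lt_card_inter_add_card_inter {α : Type*} [DecidableEq α] {d : ℕ} {A B C D E : Finset α}
    (hA : A.card = d + 1) (hBC : (B ∩ C).card = d) (hBCA : B ∩ C ⊆ A) (hD : D ⊆ B ∪ C)
    (hEA : (E ∩ A).card = d) (hED : (E ∩ D).card = d) :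
    2 * d < (E ∩ B).card + (E ∩ C).card + 2 := by
  have hU : (E ∩ D).card ≤ (E ∩ B ∪ E ∩ C).card := Finset.card_le_card (by grind)
  have hI := Finset.card_union_add_card_inter (E ∩ B) (E ∩ C)
  have hsd := Finset.card_sdiff_add_card_eq_card hBCA
  have hA' : (E ∩ A).card ≤ ((E ∩ B) ∩ (E ∩ C) ∪ A \ (B ∩ C)).card :=
    Finset.card_le_card (by grind)
  have hle := Finset.card_union_le ((E ∩ B) ∩ (E ∩ C)) (A \ (B ∩ C))
  omega

/-- The graph `G₁` with vertex set `{1,...,5}` and edge set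
`{12, 13, 15, 23, 24, 34, 45}` (here written with vertices `0,...,4`) is not the dual
graph of any pure simplicial complex of any dimension `d ≥ 1`. -/
theorem graph_G1_not_dual_of_complex
    (d : ℕ) (hd : 1 ≤ d) {α : Type*} [DecidableEq α] :
    ¬ ∃ S : Fin 5 → Finset α,
      (∀ i j, i ≠ j → S i ≠ S j) ∧
      (∀ i, (S i).card = d + 1) ∧
      (∀ i j : Fin 5, i < j →
        ((S i ∩ S j).card = d ↔
          (i, j) ∈ ({(0, 1), (0, 2), (0, 4), (1, 2), (1, 3), (2, 3), (3, 4)} :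
            Finset (Fin 5 × Fin 5)))) := by
  rintro ⟨S, hne, hc, h⟩
  have h01 : (S 0 ∩ S 1).card = d := (h 0 1 (by decide)).2 (by decide)
  have h02 : (S 0 ∩ S 2).card = d := (h 0 2 (by decide)).2 (by decide)
  have h04 : (S 0 ∩ S 4).card = d := (h 0 4 (by decide)).2 (by decide)
  have h12 : (S 1 ∩ S 2).card = d := (h 1 2 (by decide)).2 (by decide)
  have h13 : (S 1 ∩ S 3).card = d := (h 1 3 (by decide)).2 (by decide)
  have h23 : (S 2 ∩ S 3).card = d := (h 2 3 (by decide)).2 (by decide)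
  have h34 : (S 3 ∩ S 4).card = d := (h 3 4 (by decide)).2 (by decide)
  have n03 : (S 0 ∩ S 3).card ≠ d := fun e => absurd ((h 0 3 (by decide)).1 e) (by decide)
  have n14 : (S 1 ∩ S 4).card ≠ d := fun e => absurd ((h 1 4 (by decide)).1 e) (by decide)
  have n24 : (S 2 ∩ S 4).card ≠ d := fun e => absurd ((h 2 4 (by decide)).1 e) (by decide)
  have l03 := card_inter_le_of_ne (hc 0) (hc 3) (hne 0 3 (by decide))
  have l14 := card_inter_le_of_ne (hc 1) (hc 4) (hne 1 4 (by decide))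
  have l24 := card_inter_le_of_ne (hc 2) (hc 4) (hne 2 4 (by decide))
  rw [Finset.inter_comm] at h04 h13 h23 h34 n14 n24 l14 l24
  rcases inter_subset_or_subset_union (hc 0) h12 h01 h02 with hA | hA <;>
    rcases inter_subset_or_subset_union (hc 3) h12 h13 h23 with hD | hD
  · have := Finset.card_le_card (Finset.subset_inter hA hD)
    omega
  · have := lt_card_inter_add_card_inter (hc 0) h12 hA hD h04 h34
    omega
  · have := lt_card_inter_add_card_inter (hc 3) h12 hD hA h34 h04
    omega
  · -- `S 0 ∪ S 3` lies in a set of size `d + 2`, so `S 0` and `S 3` share at least `d` points.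
    have hle := Finset.card_le_card (Finset.union_subset hA hD)
    have h1 := Finset.card_union_add_card_inter (S 1) (S 2)
    have h2 := Finset.card_union_add_card_inter (S 0) (S 3)
    have := hc 0
    have := hc 1
    have := hc 2
    have := hc 3
    omega
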